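/- Let (N, 𝔖) be a regular set system with |N| = n ≥ 1 and let v, u be capacities on 𝔖 such that for every maximal chain C ∈ 𝒞(𝔖) and every i, p^{u,C}_i > 0. Then the relative entropy satisfies H(v; u) ≥ 0, and H(v; u) = 0 if and only if v ≡ u. -/

import Mathlib

open Finset

variable {α : Type*} [DecidableEq α] [Fintype α]

/-- `c = (c 0, …, c m)` is a maximal chain of the set system `S`:
`∅ = c 0 ⊊ c 1 ⊊ ⋯ ⊊ c m = N`, each `c i ∈ S`, and no element of `S` lies strictly
between consecutive elements. Its length is `m`. -/
def IsMaxChainOf (S : Finset (Finset α)) (m : ℕ) (c : Fin (m + 1) → Finset α) : Prop :=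
  c 0 = ∅ ∧ c (Fin.last m) = Finset.univ ∧ (∀ i, c i ∈ S) ∧
    (∀ i : Fin m, c i.castSucc ⊂ c i.succ) ∧
    (∀ i : Fin m, ∀ x ∈ S, ¬(c i.castSucc ⊂ x ∧ x ⊂ c i.succ))

/-- `(N, S)` is a regular set system: `∅, N ∈ S` and every maximal chain has length `|N|`. -/
def IsRegularSetSystem (S : Finset (Finset α)) : Prop :=
  ∅ ∈ S ∧ Finset.univ ∈ S ∧
    ∀ (m : ℕ) (c : Fin (m + 1) → Finset α), IsMaxChainOf S m c → m = Fintype.card α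

/-- A capacity on the set system `S`: a `[0,1]`-valued, monotone set function
with `v ∅ = 0` and `v N = 1`. -/
def IsCapacity (S : Finset (Finset α)) (v : Finset α → ℝ) : Prop :=
  v ∅ = 0 ∧ v Finset.univ = 1 ∧ (∀ A ∈ S, 0 ≤ v A ∧ v A ≤ 1) ∧
    ∀ A ∈ S, ∀ B ∈ S, A ⊆ B → v A ≤ v B

/-- `h(x) = -x log₂ x` (with the convention `0 log 0 = 0`, satisfied by `Real.logb`). -/
noncomputable def hfun (x : ℝ) : ℝ := -(x * Real.logb 2 x)

/-- Shannon entropy of a probability distribution. -/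
noncomputable def shannonEntropy {m : ℕ} (p : Fin m → ℝ) : ℝ := ∑ i, hfun (p i)

/-- The increment distribution `p^{v,C}` along a chain `c`. -/
def chainDist (v : Finset α → ℝ) {m : ℕ} (c : Fin (m + 1) → Finset α) : Fin m → ℝ :=
  fun i => v (c i.succ) - v (c i.castSucc)

/-- The maximal chains of `S` (of length `|N|`; in a regular set system these are
all the maximal chains). -/
noncomputable def maxChains (S : Finset (Finset α)) :
    Finset (Fin (Fintype.card α + 1) → Finset α) :=
  @Finset.filter _ (fun c => IsMaxChainOf S (Fintype.card α) c) (Classical.decPred _)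
    Finset.univ

/-- The entropy `H(v)` of a capacity `v` on a regular set system. -/
noncomputable def capEntropy (S : Finset (Finset α)) (v : Finset α → ℝ) : ℝ :=
  (1 / ((maxChains S).card : ℝ)) * ∑ c ∈ maxChains S, shannonEntropy (chainDist v c)

/-- Shannon relative entropy `H_S(p; q) = Σ p_i log₂ (p_i/q_i)`. -/
noncomputable def relEntropyFun {m : ℕ} (p q : Fin m → ℝ) : ℝ :=
  ∑ i, p i * Real.logb 2 (p i / q i)

/-- The relative entropy `H(v; u)` of capacities on a regular set system. -/
noncomputable def capRelEntropy (S : Finset (Finset α)) (v u : Finset α → ℝ) : ℝ :=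
  (1 / ((maxChains S).card : ℝ)) *
    ∑ c ∈ maxChains S, relEntropyFun (chainDist v c) (chainDist u c)

/-- Saturated chains exist between comparable members, written as functions on `ℕ`. -/
def SatChain {α : Type*} (S : Finset (Finset α)) (A B : Finset α) (m : ℕ)
    (f : ℕ → Finset α) : Prop :=
  f 0 = A ∧ f m = B ∧ (∀ i, i ≤ m → f i ∈ S) ∧ (∀ i, i < m → f i ⊂ f (i + 1)) ∧
    (∀ i, i < m → ∀ x ∈ S, ¬(f i ⊂ x ∧ x ⊂ f (i + 1)))

theorem SatChain.append {α : Type*} {S : Finset (Finset α)} {A B C : Finset α} {m k : ℕ}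
    {f g : ℕ → Finset α} (hf : SatChain S A B m f) (hg : SatChain S B C k g) :
    SatChain S A C (m + k) (fun i => if i ≤ m then f i else g (i - m)) := by
  obtain ⟨f0, fm, fS, fl, fx⟩ := hf
  obtain ⟨g0, gm, gS, gl, gx⟩ := hg
  have key : ∀ i, i < m + k → (i < m ∧ i + 1 ≤ m) ∨
      (∃ j, j < k ∧ i = m + j) := by
    intro i hi
    by_cases h : i < m
    · left; omega
    · right; exact ⟨i - m, by omega, by omega⟩
  have hge : ∀ j, (if m + j ≤ m then f (m + j) else g (m + j - m)) = g j := by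
    intro j
    rcases Nat.eq_zero_or_pos j with rfl | hj
    · simp [fm, g0]
    · rw [if_neg (by omega)]; simp
  refine ⟨by simp [f0], ?_, ?_, ?_, ?_⟩
  · exact (hge k).trans gm
  · intro i hi
    dsimp only
    split_ifs with h
    · exact fS i h
    · exact gS _ (by omega)
  · intro i hi
    rcases key i hi with ⟨h1, h2⟩ | ⟨j, hj, rfl⟩
    · simpa [h1.le, h2] using fl i h1
    · dsimp only
      rw [hge, add_assoc, hge]; exact gl j hj
  · intro i hi
    rcases key i hi with ⟨h1, h2⟩ | ⟨j, hj, rfl⟩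
    · simpa [h1.le, h2] using fx i h1
    · dsimp only
      rw [hge, add_assoc, hge]; exact gx j hj

theorem exists_satChain {α : Type*} (S : Finset (Finset α)) :
    ∀ (d : ℕ) (A B : Finset α), A ∈ S → B ∈ S → A ⊆ B → B.card ≤ A.card + d →
      ∃ m f, SatChain S A B m f := by
  intro d
  induction d using Nat.strong_induction_on with
  | _ d ih =>
    intro A B hA hB hAB hd
    by_cases hE : A = B
    · subst hE
      exact ⟨0, fun _ => A, rfl, rfl, fun _ _ => hA, by simp, by simp⟩
    have hss : A ⊂ B := lt_of_le_of_ne hAB hE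
    by_cases hx : ∃ x ∈ S, A ⊂ x ∧ x ⊂ B
    · obtain ⟨x, hxS, h1, h2⟩ := hx
      have c1 := Finset.card_lt_card h1
      have c2 := Finset.card_lt_card h2
      obtain ⟨m, f, hf⟩ := ih (d - 1) (by omega) A x hA hxS h1.subset (by omega)
      obtain ⟨k, g, hg⟩ := ih (d - 1) (by omega) x B hxS hB h2.subset (by omega)
      exact ⟨_, _, hf.append hg⟩
    · push Not at hx
      refine ⟨1, fun i => if i = 0 then A else B, by simp, by simp, ?_, ?_, ?_⟩
      · intro i _; dsimp only; split_ifs <;> assumption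
      · intro i hi
        obtain rfl : i = 0 := by omega
        simpa using hss
      · intro i hi x hxS
        obtain rfl : i = 0 := by omega
        simpa using hx x hxS

theorem exists_maxChain_through {α : Type*} [DecidableEq α] [Fintype α]
    (S : Finset (Finset α)) (hS : IsRegularSetSystem S) (A : Finset α) (hA : A ∈ S) :
    ∃ c ∈ maxChains S, ∃ i, c i = A := by
  obtain ⟨h0, h1, hr⟩ := hS
  obtain ⟨m, f, hf⟩ := exists_satChain S A.card ∅ A h0 hA (by simp) (by simp)
  obtain ⟨k, g, hg⟩ := exists_satChain S (univ : Finset α).card A univ hA h1 (by simp) (by simp)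
  obtain ⟨F, hF, hFA⟩ : ∃ F, SatChain S ∅ univ (m + k) F ∧ F m = A :=
    ⟨_, hf.append hg, by simpa using hf.2.1⟩
  obtain ⟨F0, Fm, FS, Fl, Fx⟩ := hF
  have hc : IsMaxChainOf S (m + k) (fun i => F i) :=
    ⟨by simpa using F0, by simpa using Fm, fun i => FS i (by omega),
      fun i => by simpa using Fl i i.2, fun i => by simpa using Fx i i.2⟩
  have hm := hr _ _ hc
  rw [hm] at hc
  refine ⟨fun i => F i, by simpa [maxChains] using hc, ⟨m, by omega⟩, hFA⟩

theorem relEntropy_gibbs {m : ℕ} (p q : Fin m → ℝ) (hp : ∀ i, 0 ≤ p i) (hq : ∀ i, 0 < q i)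
    (hs : ∑ i, p i = ∑ i, q i) :
    0 ≤ relEntropyFun p q ∧ (relEntropyFun p q = 0 ↔ p = q) := by
  have hl : 0 < Real.log 2 := Real.log_pos (by norm_num)
  have hterm : ∀ i ∈ (univ : Finset (Fin m)), 0 ≤ q i * InformationTheory.klFun (p i / q i) :=
    fun i _ => mul_nonneg (hq i).le
      (InformationTheory.klFun_nonneg (div_nonneg (hp i) (hq i).le))
  have key : relEntropyFun p q
      = (∑ i, q i * InformationTheory.klFun (p i / q i)) / Real.log 2 := by
    have h1 : ∀ i, q i * InformationTheory.klFun (p i / q i)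
        = p i * Real.log (p i / q i) + (q i - p i) := by
      intro i
      have := (hq i).ne'
      rw [InformationTheory.klFun_apply]
      field_simp
      ring
    simp only [h1, sum_add_distrib, sum_sub_distrib, hs, sub_self, add_zero]
    simp only [relEntropyFun, Real.logb, sum_div, mul_div_assoc]
  rw [key]
  refine ⟨div_nonneg (sum_nonneg hterm) hl.le, ?_⟩
  rw [div_eq_zero_iff, or_iff_left hl.ne', sum_eq_zero_iff_of_nonneg hterm]
  constructor
  · intro h
    funext i
    have := h i (mem_univ i)
    rw [mul_eq_zero, or_iff_right (hq i).ne',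
      InformationTheory.klFun_eq_zero_iff (div_nonneg (hp i) (hq i).le),
      div_eq_one_iff_eq (hq i).ne'] at this
    exact this
  · rintro rfl i _
    rw [div_self (hq i).ne']
    simp [InformationTheory.klFun_apply]

theorem fin_telescope {m : ℕ} (f : Fin (m + 1) → ℝ) :
    ∑ i : Fin m, (f i.succ - f i.castSucc) = f (Fin.last m) - f 0 := by
  have h1 := Fin.sum_univ_succ f
  have h2 := Fin.sum_univ_castSucc f
  rw [sum_sub_distrib]
  linarith

theorem chain_gibbs {α : Type*} [DecidableEq α] [Fintype α] (S : Finset (Finset α))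
    (v u : Finset α → ℝ) (hv : IsCapacity S v) (hu : IsCapacity S u)
    (c : Fin (Fintype.card α + 1) → Finset α) (hc : IsMaxChainOf S (Fintype.card α) c)
    (hpos : ∀ i : Fin (Fintype.card α), 0 < chainDist u c i) :
    0 ≤ relEntropyFun (chainDist v c) (chainDist u c) ∧
      (relEntropyFun (chainDist v c) (chainDist u c) = 0 ↔ ∀ i, v (c i) = u (c i)) := by
  obtain ⟨c0, cm, cS, cl, -⟩ := hc
  have hp : ∀ i, 0 ≤ chainDist v c i := fun i =>
    sub_nonneg.2 (hv.2.2.2 _ (cS _) _ (cS _) (cl i).subset)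
  have hs : ∑ i, chainDist v c i = ∑ i, chainDist u c i := by
    have h1 := fin_telescope (fun i => v (c i))
    have h2 := fin_telescope (fun i => u (c i))
    simp only [c0, cm, hv.1, hv.2.1, hu.1, hu.2.1] at h1 h2
    exact h1.trans h2.symm
  obtain ⟨g1, g2⟩ := relEntropy_gibbs _ _ hp hpos hs
  refine ⟨g1, g2.trans ⟨fun h i => ?_, fun h => ?_⟩⟩
  · induction i using Fin.induction with
    | zero => rw [c0, hv.1, hu.1]
    | succ i ih =>
      have := congrFun h i
      simp only [chainDist] at this
      linarith
  · funext i
    simp only [chainDist, h]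



/-- the relative entropy of capacities on a regular set system is
nonnegative, and vanishes iff the two capacities coincide (assuming the increments
of `u` along every maximal chain are positive). -/
theorem capRelEntropy_nonneg_and_eq_zero_iff (S : Finset (Finset α))
    (hS : IsRegularSetSystem S) (hn : 1 ≤ Fintype.card α)
    (v u : Finset α → ℝ) (hv : IsCapacity S v) (hu : IsCapacity S u)
    (hupos : ∀ c ∈ maxChains S, ∀ i : Fin (Fintype.card α), 0 < chainDist u c i) :
    0 ≤ capRelEntropy S v u ∧ (capRelEntropy S v u = 0 ↔ ∀ A ∈ S, v A = u A) := by


  have hmem : ∀ c ∈ maxChains S, IsMaxChainOf S (Fintype.card α) c := by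
    intro c hc
    simpa [maxChains] using hc
  have hg := fun c hc => chain_gibbs S v u hv hu c (hmem c hc) (hupos c hc)
  obtain ⟨c₀, hc₀, -⟩ := exists_maxChain_through S hS ∅ hS.1
  have hcard : (0 : ℝ) < 1 / ((maxChains S).card : ℝ) := by
    have : 0 < (maxChains S).card := Finset.card_pos.2 ⟨c₀, hc₀⟩
    positivity
  unfold capRelEntropy
  refine ⟨mul_nonneg hcard.le (sum_nonneg fun c hc => (hg c hc).1), ?_⟩
  rw [mul_eq_zero, or_iff_right hcard.ne', sum_eq_zero_iff_of_nonneg fun c hc => (hg c hc).1]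
  constructor
  · intro h A hA
    obtain ⟨c, hc, i, rfl⟩ := exists_maxChain_through S hS A hA
    exact (hg c hc).2.1 (h c hc) i
  · intro h c hc
    exact (hg c hc).2.2 fun i => h _ ((hmem c hc).2.2.1 i)
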